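/- arXiv:2410.02418 — 2 statements merged into one kernel-verified Lean document; each statement's English description precedes it below -/
import Mathlib

section
/- Define t_4 = e A_1 A_{−1} A_{−i} A_{−i} R³ and t_{m+1} = t_m A_1 R² for m ≥ 4. Then for every m ≥ 4, every integer ℓ > 0 and every d ∈ {1, −1, i, −i}: (1) t_m A_1 ∼ t_{m+1}; (2) t_m A_{−1} ≺ t_{m+1} and t_m A_i ≺ t_{m+1}; (3) t_m A_{−i} A_d ≺ t_{m+2}; (4) t_m A_0^ℓ A_d ≺ t_{m+1}. -/
/-!
Conjugation by the rotation `R` permutes the matrices `A_1, A_i, A_{-1}, A_{-i}` cyclically, and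
the reflection `C R³` satisfies `C R³ A_1 = A_1 C`. As `≺` does not change when its left side is
multiplied by an element of `𝒫`, every comparison `u A_d ≺ v` becomes one about `A_1`, for a
rotated and possibly reflected row `u`. Since `t_{m+1} = t_m A_1 R²`, a single criterion for
`u A_1 ≺ v A_1 R²` then suffices: the first entry of `u A_1` is a sum of entries that can be
compared one at a time.

What remains are inequalities between the entries of `t_m = (x, b, s, y, r, s, 0, 0, r)`. The step
`t ↦ t A_1 R²` takes `(x, b, y, s, r)` to `(x + 2 y + 2 s, s + y, x, y, s)`, so the entries grow
by a factor slightly above two, and linear bounds expressing this propagate from `t_4`.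
-/

open Matrix

noncomputable section

/-- The imaginary unit `i` in the Gaussian integers. -/
def gI : GaussianInt := ⟨0, 1⟩

/-- The base `β = i - 1`. -/
def gβ : GaussianInt := ⟨-1, 1⟩

/-- The digit set `D = {0, 1, -1, i, -i}`. -/
def gD : Set GaussianInt := {0, 1, -1, gI, -gI}

/-- Value of a digit string `d_{n-1} ⋯ d_0`, given as a list with the least
significant digit first: `gval [d_0, d_1, …, d_{n-1}] = Σ d_j β^j`. -/
def gval (l : List GaussianInt) : GaussianInt :=
  l.foldr (fun d acc => d + gβ * acc) 0

/-- `l` (least significant digit first) is a `(β, D)`-representation of `x`. -/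
def gIsRep (x : GaussianInt) (l : List GaussianInt) : Prop :=
  (∀ d ∈ l, d ∈ gD) ∧ gval l = x

/-- A representation is normalized if it is empty or its leading digit
(the last entry of the LSD-first list) is nonzero. -/
def gNormalized (l : List GaussianInt) : Prop := l.getLast? ≠ some 0

/-- Number of nonzero digits (Hamming weight). -/
def gweight (l : List GaussianInt) : ℕ := (l.filter (fun d => d ≠ 0)).length

/-- The row vector `e = (1,0,0,0,0,0,0,0,0)`. -/
def e9 : Matrix (Fin 1) (Fin 9) ℤ := !![1,0,0,0,0,0,0,0,0]

/-- The permutation matrix `R = diag(1, P1, P1)`. -/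
def R9 : Matrix (Fin 9) (Fin 9) ℤ :=
  !![1,0,0,0,0,0,0,0,0;
     0,0,1,0,0,0,0,0,0;
     0,0,0,1,0,0,0,0,0;
     0,0,0,0,1,0,0,0,0;
     0,1,0,0,0,0,0,0,0;
     0,0,0,0,0,0,1,0,0;
     0,0,0,0,0,0,0,1,0;
     0,0,0,0,0,0,0,0,1;
     0,0,0,0,0,1,0,0,0]

/-- The matrix `A_1`. -/
def A1 : Matrix (Fin 9) (Fin 9) ℤ :=
  !![1,1,0,0,0,0,0,0,0;
     0,0,0,0,0,0,0,0,0;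
     2,0,1,1,0,0,1,0,0;
     2,0,0,1,1,0,0,1,0;
     0,0,0,0,0,0,0,0,0;
     0,0,0,0,0,0,0,0,0;
     1,0,0,1,0,0,0,0,0;
     0,0,0,0,0,0,0,0,0;
     0,0,0,0,0,0,0,0,0]

/-- The matrix `A_0`. -/
def A0 : Matrix (Fin 9) (Fin 9) ℤ :=
  !![1,0,0,0,0,0,0,0,0;
     0,0,0,0,0,0,1,0,0;
     0,0,0,0,0,0,0,1,0;
     0,0,0,0,0,0,0,0,1;
     0,0,0,0,0,1,0,0,0;
     0,0,0,0,0,0,0,0,0;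
     0,0,0,0,0,0,0,0,0;
     0,0,0,0,0,0,0,0,0;
     0,0,0,0,0,0,0,0,0]

/-- The matrix `A_i = Rᵀ A_1 R`. -/
def Ai : Matrix (Fin 9) (Fin 9) ℤ := R9ᵀ * A1 * R9

/-- The matrix `A_{-1} = Rᵀ A_i R`. -/
def Am1 : Matrix (Fin 9) (Fin 9) ℤ := R9ᵀ * Ai * R9

/-- The matrix `A_{-i} = Rᵀ A_{-1} R`. -/
def Ami : Matrix (Fin 9) (Fin 9) ℤ := R9ᵀ * Am1 * R9

/-- The matrix `A_d` associated with a digit `d ∈ D`. -/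
def Amat (d : GaussianInt) : Matrix (Fin 9) (Fin 9) ℤ :=
  if d = 0 then A0
  else if d = 1 then A1
  else if d = gI then Ai
  else if d = -1 then Am1
  else Ami

/-- The permutation matrix `C = diag(1, P2, P3)`. -/
def C9 : Matrix (Fin 9) (Fin 9) ℤ :=
  !![1,0,0,0,0,0,0,0,0;
     0,1,0,0,0,0,0,0,0;
     0,0,0,0,1,0,0,0,0;
     0,0,0,1,0,0,0,0,0;
     0,0,1,0,0,0,0,0,0;
     0,0,0,0,0,0,0,0,1;
     0,0,0,0,0,0,0,1,0;
     0,0,0,0,0,0,1,0,0;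
     0,0,0,0,0,1,0,0,0]

/-- The group `𝒫 = {R^k, C R^k : k = 0,1,2,3}` of permutation matrices. -/
def Pgrp : Set (Matrix (Fin 9) (Fin 9) ℤ) :=
  {M | ∃ k : Fin 4, M = R9 ^ (k : ℕ) ∨ M = C9 * R9 ^ (k : ℕ)}

/-- `u ≼ v` : `u` is majorised by `v`. -/
def gmaj (u v : Matrix (Fin 1) (Fin 9) ℤ) : Prop :=
  ∃ P ∈ Pgrp, ∀ j, (u * P) 0 j ≤ v 0 j

/-- `u ≺ v` : `u` is strictly majorised by `v`. -/
def gsmaj (u v : Matrix (Fin 1) (Fin 9) ℤ) : Prop :=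
  ∃ P ∈ Pgrp, (∀ j, (u * P) 0 j ≤ v 0 j) ∧ (u * P) 0 0 < v 0 0

/-- `u ∼ v` : `u ≼ v` and `v ≼ u`. -/
def geqv (u v : Matrix (Fin 1) (Fin 9) ℤ) : Prop := gmaj u v ∧ gmaj v u

/-- The row vectors `t_m` for `m ≥ 4`: `t_4 = e A_1 A_{-1} A_{-i} A_{-i} R³`
and `t_{m+1} = t_m A_1 R²`. -/
def tvec (m : ℕ) : Matrix (Fin 1) (Fin 9) ℤ :=
  e9 * (A1 * Am1 * Ami * Ami * R9 ^ 3) * (A1 * R9 ^ 2) ^ (m - 4)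

variable {u v t : Matrix (Fin 1) (Fin 9) ℤ}

/-! ### The group `𝒫` -/

section Pgrp

variable {P Q : Matrix (Fin 9) (Fin 9) ℤ}

lemma R9_pow_four : R9 ^ 4 = 1 := by
  simp only [pow_succ, pow_zero, one_mul]
  decide

lemma C9_mul_C9 : C9 * C9 = 1 := by decide

lemma R9_mul_C9 : R9 * C9 = C9 * R9 ^ 3 := by
  simp only [pow_succ, pow_zero, one_mul]
  decide

lemma R9_pow_mul_C9 (n : ℕ) : R9 ^ n * C9 = C9 * R9 ^ (3 * n) := by
  have h : SemiconjBy C9 (R9 ^ 3) R9 := R9_mul_C9.symm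
  rw [pow_mul]
  exact (h.pow_right n).symm

lemma C9_mul_R9_pow_mul_C9_mul_R9_pow (k l : ℕ) :
    C9 * R9 ^ k * (C9 * R9 ^ l) = R9 ^ (3 * k + l) := by
  rw [mul_assoc, ← mul_assoc (R9 ^ k), R9_pow_mul_C9, mul_assoc C9, ← mul_assoc C9, C9_mul_C9,
    one_mul, ← pow_add]

lemma R9_pow_mem_Pgrp (n : ℕ) : R9 ^ n ∈ Pgrp :=
  ⟨⟨n % 4, Nat.mod_lt n four_pos⟩, .inl (pow_eq_pow_mod n R9_pow_four)⟩

lemma C9_mul_R9_pow_mem_Pgrp (n : ℕ) : C9 * R9 ^ n ∈ Pgrp :=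
  ⟨⟨n % 4, Nat.mod_lt n four_pos⟩, .inr (congrArg (C9 * ·) (pow_eq_pow_mod n R9_pow_four))⟩

lemma mul_mem_Pgrp (hP : P ∈ Pgrp) (hQ : Q ∈ Pgrp) : P * Q ∈ Pgrp := by
  obtain ⟨k, rfl | rfl⟩ := hP <;> obtain ⟨l, rfl | rfl⟩ := hQ
  · rw [← pow_add]
    exact R9_pow_mem_Pgrp _
  · rw [← mul_assoc, R9_pow_mul_C9, mul_assoc, ← pow_add]
    exact C9_mul_R9_pow_mem_Pgrp _
  · rw [mul_assoc, ← pow_add]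
    exact C9_mul_R9_pow_mem_Pgrp _
  · rw [C9_mul_R9_pow_mul_C9_mul_R9_pow]
    exact R9_pow_mem_Pgrp _

lemma exists_mem_Pgrp_mul_eq_one (hP : P ∈ Pgrp) : ∃ Q ∈ Pgrp, P * Q = 1 := by
  obtain ⟨k, rfl | rfl⟩ := hP
  · refine ⟨R9 ^ (3 * k : ℕ), R9_pow_mem_Pgrp _, ?_⟩
    rw [← pow_add, show (k + 3 * k : ℕ) = 4 * k by lia, pow_mul, R9_pow_four, one_pow]
  · -- `C R^k` is a reflection, hence its own inverse.
    refine ⟨C9 * R9 ^ (k : ℕ), C9_mul_R9_pow_mem_Pgrp _, ?_⟩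
    rw [C9_mul_R9_pow_mul_C9_mul_R9_pow, show (3 * k + k : ℕ) = 4 * k by lia, pow_mul,
      R9_pow_four, one_pow]

lemma gsmaj_of_gsmaj_mul (hP : P ∈ Pgrp) (h : gsmaj (u * P) v) : gsmaj u v := by
  obtain ⟨Q, hQ, h⟩ := h
  exact ⟨P * Q, mul_mem_Pgrp hP hQ, by rwa [← Matrix.mul_assoc]⟩

lemma gsmaj_mul_iff (hP : P ∈ Pgrp) : gsmaj (u * P) v ↔ gsmaj u v := by
  refine ⟨gsmaj_of_gsmaj_mul hP, fun h ↦ ?_⟩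
  obtain ⟨Q, hQ, hPQ⟩ := exists_mem_Pgrp_mul_eq_one hP
  exact gsmaj_of_gsmaj_mul hQ (by rwa [Matrix.mul_assoc, hPQ, Matrix.mul_one])

lemma geqv_mul_of_mem_Pgrp (hP : P ∈ Pgrp) : geqv u (u * P) := by
  obtain ⟨Q, hQ, hPQ⟩ := exists_mem_Pgrp_mul_eq_one hP
  exact ⟨⟨P, hP, fun _ ↦ le_rfl⟩, ⟨Q, hQ, by simp [Matrix.mul_assoc, hPQ]⟩⟩

end Pgrp

/-! ### Products with the matrices `A_d` -/

section Rows

variable {a b c d e f g h i a' b' c' d' e' f' g' h' i' : ℤ}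

lemma row_mul_R9 : !![a, b, c, d, e, f, g, h, i] * R9 = !![a, e, b, c, d, i, f, g, h] := by
  ext p q
  fin_cases p
  fin_cases q <;> simp [Matrix.mul_apply, Fin.sum_univ_succ, R9]

lemma row_mul_R9_transpose :
    !![a, b, c, d, e, f, g, h, i] * R9ᵀ = !![a, c, d, e, b, g, h, i, f] := by
  ext p q
  fin_cases p
  fin_cases q <;> simp [Matrix.mul_apply, Fin.sum_univ_succ, R9]

lemma row_mul_C9 : !![a, b, c, d, e, f, g, h, i] * C9 = !![a, b, e, d, c, i, h, g, f] := by
  ext p q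
  fin_cases p
  fin_cases q <;> simp [Matrix.mul_apply, Fin.sum_univ_succ, C9]

lemma row_mul_C9_mul_R9_cube :
    !![a, b, c, d, e, f, g, h, i] * (C9 * R9 ^ 3) = !![a, e, d, c, b, h, g, f, i] := by
  simp only [pow_succ, pow_zero, one_mul, ← Matrix.mul_assoc, row_mul_C9, row_mul_R9]

lemma row_mul_A0 : !![a, b, c, d, e, f, g, h, i] * A0 = !![a, 0, 0, 0, 0, e, b, c, d] := by
  ext p q
  fin_cases p
  fin_cases q <;> simp [Matrix.mul_apply, Fin.sum_univ_succ, A0]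

lemma row_mul_A1 :
    !![a, b, c, d, e, f, g, h, i] * A1 =
      !![a + 2 * c + 2 * d + g, a, c, c + d + g, d, 0, c, d, 0] := by
  ext p q
  fin_cases p
  fin_cases q <;> simp [Matrix.mul_apply, Fin.sum_univ_succ, A1] <;> ring

lemma row_mul_Ami :
    !![a, b, c, d, e, f, g, h, i] * Ami =
      !![a + 2 * b + 2 * c + f, b, b + c + f, c, a, b, c, 0, 0] := by
  simp only [Ami, Am1, Ai, ← Matrix.mul_assoc, row_mul_R9_transpose, row_mul_A1, row_mul_R9]

lemma row_mul_A1_mul_R9_sq :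
    !![a, b, c, d, e, f, g, h, i] * A1 * R9 ^ 2 =
      !![a + 2 * c + 2 * d + g, c + d + g, d, a, c, d, 0, 0, c] := by
  rw [pow_two, ← Matrix.mul_assoc, row_mul_A1, row_mul_R9, row_mul_R9]

lemma exists_row_mul_A0_pow {y : ℤ} {ℓ : ℕ} (hℓ : 0 < ℓ) (hy : 0 ≤ y) (hb : b ≤ y) (hc : c ≤ y)
    (hd : d ≤ y) (he : e ≤ y) :
    ∃ f' ≤ y, ∃ g' ≤ y, ∃ h' ≤ y, ∃ i' ≤ y,
      !![a, b, c, d, e, f, g, h, i] * A0 ^ ℓ = !![a, 0, 0, 0, 0, f', g', h', i'] := by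
  induction ℓ, hℓ using Nat.le_induction with
  | base =>
    exact ⟨e, he, b, hb, c, hc, d, hd, by
      simp only [Nat.succ_eq_add_one, zero_add, pow_one, row_mul_A0]⟩
  | succ n _ ih =>
    obtain ⟨f', -, g', -, h', -, i', -, hrow⟩ := ih
    refine ⟨0, hy, 0, hy, 0, hy, 0, hy, ?_⟩
    rw [pow_succ, ← Matrix.mul_assoc, hrow, row_mul_A0]

lemma gsmaj_row_mul_A1 (ha : a ≤ a') (hc : c ≤ c') (hd : d ≤ d') (hcdg : c + d + g < c' + d' + g') :
    gsmaj (!![a, b, c, d, e, f, g, h, i] * A1)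
      (!![a', b', c', d', e', f', g', h', i'] * A1 * R9 ^ 2) := by
  have hfirst : a + 2 * c + 2 * d + g < a' + 2 * c' + 2 * d' + g' := by linarith
  rw [← gsmaj_mul_iff (R9_pow_mem_Pgrp 2), row_mul_A1_mul_R9_sq, row_mul_A1_mul_R9_sq]
  refine ⟨1, R9_pow_mem_Pgrp 0, ?_, by simpa using hfirst⟩
  rw [Matrix.mul_one]
  intro j
  fin_cases j <;> simp <;> linarith

lemma C9_mul_R9_cube_mul_A1 : C9 * R9 ^ 3 * A1 = A1 * C9 := by
  simp only [pow_succ, pow_zero, one_mul]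
  decide

lemma gsmaj_row_mul_A1_of_swap (ha : a ≤ a') (hc : c ≤ d') (hd : d ≤ c')
    (hcdg : c + d + g < c' + d' + g') :
    gsmaj (!![a, b, c, d, e, f, g, h, i] * A1)
      (!![a', b', c', d', e', f', g', h', i'] * A1 * R9 ^ 2) := by
  have hC : C9 ∈ Pgrp := by simpa using C9_mul_R9_pow_mem_Pgrp 0
  rw [← gsmaj_mul_iff hC, Matrix.mul_assoc, ← C9_mul_R9_cube_mul_A1, ← Matrix.mul_assoc,
    row_mul_C9_mul_R9_cube]
  exact gsmaj_row_mul_A1 ha hd hc (by rwa [add_comm d c])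

lemma gsmaj_mul_conj_R9 {M : Matrix (Fin 9) (Fin 9) ℤ} :
    gsmaj (u * (R9ᵀ * M * R9)) v ↔ gsmaj (u * R9ᵀ * M) v := by
  have hR : R9 ∈ Pgrp := by simpa using R9_pow_mem_Pgrp 1
  rw [← Matrix.mul_assoc, ← Matrix.mul_assoc, gsmaj_mul_iff hR]

lemma gsmaj_row_mul_Ai_iff :
    gsmaj (!![a, b, c, d, e, f, g, h, i] * Ai) v ↔
      gsmaj (!![a, c, d, e, b, g, h, i, f] * A1) v := by
  rw [Ai, gsmaj_mul_conj_R9, row_mul_R9_transpose]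

lemma gsmaj_row_mul_Am1_iff :
    gsmaj (!![a, b, c, d, e, f, g, h, i] * Am1) v ↔
      gsmaj (!![a, d, e, b, c, h, i, f, g] * A1) v := by
  rw [Am1, gsmaj_mul_conj_R9, row_mul_R9_transpose, gsmaj_row_mul_Ai_iff]

lemma gsmaj_row_mul_Ami_iff :
    gsmaj (!![a, b, c, d, e, f, g, h, i] * Ami) v ↔
      gsmaj (!![a, e, b, c, d, i, f, g, h] * A1) v := by
  rw [Ami, gsmaj_mul_conj_R9, row_mul_R9_transpose, gsmaj_row_mul_Am1_iff]

lemma gsmaj_row_mul_Amat {δ : GaussianInt} (hδ : δ ∈ ({1, -1, gI, -gI} : Set GaussianInt))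
    (h_one : gsmaj (!![a, b, c, d, e, f, g, h, i] * A1) v)
    (h_I : gsmaj (!![a, c, d, e, b, g, h, i, f] * A1) v)
    (h_neg_one : gsmaj (!![a, d, e, b, c, h, i, f, g] * A1) v)
    (h_neg_I : gsmaj (!![a, e, b, c, d, i, f, g, h] * A1) v) :
    gsmaj (!![a, b, c, d, e, f, g, h, i] * Amat δ) v := by
  rcases hδ with rfl | rfl | rfl | rfl
  · rw [show Amat 1 = A1 by rw [Amat, if_neg one_ne_zero, if_pos rfl]]
    exact h_one
  · rw [show Amat (-1) = Am1 by simp [Amat, gI, Zsqrtd.ext_iff]]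
    exact gsmaj_row_mul_Am1_iff.2 h_neg_one
  · rw [show Amat gI = Ai by simp [Amat, gI, Zsqrtd.ext_iff]]
    exact gsmaj_row_mul_Ai_iff.2 h_I
  · rw [show Amat (-gI) = Ami by simp [Amat, gI, Zsqrtd.ext_iff]]
    exact gsmaj_row_mul_Ami_iff.2 h_neg_I

end Rows

/-! ### The vectors `t_m` -/

/-- The growth conditions that the entries of `t_m = (x, b, s, y, r, s, 0, 0, r)` satisfy. They are
chosen to be preserved by `t ↦ t A_1 R²` and to imply all the comparisons. -/
structure TGrowth (x b y s r : ℤ) : Prop where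
  r_pos : 0 < r
  two_mul_r_lt : 2 * r < s
  two_mul_s_lt : 2 * s < y
  two_mul_y_lt : 2 * y < x
  le_x : y + 2 * s + 2 * r ≤ x
  x_lt : x < 2 * y + 2 * s
  b_le : b ≤ r + s + 1

/-- The row vectors of the form `(x, b, s, y, r, s, 0, 0, r)` with entries growing like those
of `t_m`. -/
def IsTRow (t : Matrix (Fin 1) (Fin 9) ℤ) : Prop :=
  ∃ x b y s r : ℤ, TGrowth x b y s r ∧ t = !![x, b, s, y, r, s, 0, 0, r]

lemma TGrowth.step {x b y s r : ℤ} (h : TGrowth x b y s r) :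
    TGrowth (x + 2 * y + 2 * s) (s + y) x y s where
  r_pos := by linarith [h.r_pos, h.two_mul_r_lt]
  two_mul_r_lt := h.two_mul_s_lt
  two_mul_s_lt := h.two_mul_y_lt
  two_mul_y_lt := by linarith [h.x_lt]
  le_x := le_rfl
  x_lt := by linarith [h.r_pos, h.two_mul_r_lt, h.two_mul_s_lt, h.le_x]
  b_le := by linarith

lemma IsTRow.mul_A1_mul_R9_sq (ht : IsTRow t) : IsTRow (t * A1 * R9 ^ 2) := by
  obtain ⟨x, b, y, s, r, h, rfl⟩ := ht
  refine ⟨_, _, _, _, _, h.step, ?_⟩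
  rw [row_mul_A1_mul_R9_sq, add_zero, add_zero, add_right_comm]

lemma tvec_succ {m : ℕ} (hm : 4 ≤ m) : tvec (m + 1) = tvec m * A1 * R9 ^ 2 := by
  rw [tvec, tvec, Nat.sub_add_comm hm, pow_succ (A1 * R9 ^ 2)]
  simp only [Matrix.mul_assoc]

lemma isTRow_tvec_four : IsTRow (tvec 4) := by
  refine ⟨17, 5, 8, 3, 1, by constructor <;> norm_num, ?_⟩
  simp only [tvec, e9, Am1, Ai, ← Matrix.mul_assoc, pow_succ, pow_zero, one_mul, Nat.sub_self,
    Matrix.mul_one, row_mul_R9_transpose, row_mul_A1, row_mul_Ami, row_mul_R9]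
  norm_num

lemma isTRow_tvec {m : ℕ} (hm : 4 ≤ m) : IsTRow (tvec m) := by
  induction m, hm using Nat.le_induction with
  | base => exact isTRow_tvec_four
  | succ m hm ih =>
    rw [tvec_succ hm]
    exact ih.mul_A1_mul_R9_sq

namespace IsTRow

lemma gsmaj_mul_Am1 (ht : IsTRow t) : gsmaj (t * Am1) (t * A1 * R9 ^ 2) := by
  obtain ⟨x, b, y, s, r, h, rfl⟩ := ht
  have hrs : r < s := by linarith [h.r_pos, h.two_mul_r_lt]
  have hby : b ≤ y := by linarith [h.two_mul_s_lt, h.b_le]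
  have hrby : 2 * r + b < s + y := by linarith [h.two_mul_r_lt, h.two_mul_s_lt, h.b_le]
  exact gsmaj_row_mul_Am1_iff.2 (gsmaj_row_mul_A1 le_rfl hrs.le hby (by linarith))

lemma gsmaj_mul_Ai (ht : IsTRow t) : gsmaj (t * Ai) (t * A1 * R9 ^ 2) := by
  obtain ⟨x, b, y, s, r, h, rfl⟩ := ht
  have hrs : r < s := by linarith [h.r_pos, h.two_mul_r_lt]
  exact gsmaj_row_mul_Ai_iff.2 (gsmaj_row_mul_A1_of_swap le_rfl le_rfl hrs.le (by linarith))

lemma gsmaj_mul_Ami_mul_Amat (ht : IsTRow t) {d : GaussianInt}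
    (hd : d ∈ ({1, -1, gI, -gI} : Set GaussianInt)) :
    gsmaj (t * Ami * Amat d) (t * A1 * R9 ^ 2 * A1 * R9 ^ 2) := by
  obtain ⟨x, b, y, s, r, h, rfl⟩ := ht
  rw [row_mul_Ami, row_mul_A1_mul_R9_sq]
  have hs : 0 < s := by linarith [h.r_pos, h.two_mul_r_lt]
  have hsy : s < y := by linarith [h.two_mul_s_lt]
  have hby : b < y := by linarith [h.two_mul_r_lt, h.two_mul_s_lt, h.b_le]
  have hfirst : 2 * b + 3 * s ≤ 2 * y + 2 * s := by
    linarith [h.two_mul_r_lt, h.two_mul_s_lt, h.b_le]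
  have hbx : b + 2 * s ≤ x := by linarith [h.r_pos, h.le_x, h.b_le]
  have hbxy : 3 * b + 2 * s < y + x := by
    linarith [h.r_pos, h.two_mul_r_lt, h.two_mul_s_lt, h.le_x, h.b_le]
  apply gsmaj_row_mul_Amat hd
  · apply gsmaj_row_mul_A1_of_swap <;> linarith [h.two_mul_s_lt]
  · apply gsmaj_row_mul_A1 <;> linarith
  · apply gsmaj_row_mul_A1_of_swap <;> linarith
  · apply gsmaj_row_mul_A1 <;> linarith

lemma gsmaj_mul_A0_pow_mul_Amat (ht : IsTRow t) {ℓ : ℕ} (hℓ : 0 < ℓ) {d : GaussianInt}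
    (hd : d ∈ ({1, -1, gI, -gI} : Set GaussianInt)) :
    gsmaj (t * A0 ^ ℓ * Amat d) (t * A1 * R9 ^ 2) := by
  obtain ⟨x, b, y, s, r, h, rfl⟩ := ht
  have hr : 0 < r := h.r_pos
  have hrs : r < s := by linarith [h.two_mul_r_lt]
  have hsy : s < y := by linarith [h.two_mul_s_lt]
  have hby : b < y := by linarith [h.two_mul_s_lt, h.b_le]
  obtain ⟨q₁, hq₁, q₂, hq₂, q₃, hq₃, q₄, hq₄, hrow⟩ :=
    exists_row_mul_A0_pow hℓ (by linarith : 0 ≤ y) hby.le hsy.le le_rfl (by linarith : r ≤ y)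
  rw [hrow]
  apply gsmaj_row_mul_Amat hd <;>
    exact gsmaj_row_mul_A1 le_rfl (by linarith) (by linarith) (by linarith)

end IsTRow

/-- Majorisation relations for the vectors `t_m`. -/
theorem stmt12 (m : ℕ) (hm : 4 ≤ m) (ℓ : ℕ) (hℓ : 0 < ℓ)
    (d : GaussianInt) (hd : d ∈ ({1, -1, gI, -gI} : Set GaussianInt)) :
    geqv (tvec m * A1) (tvec (m + 1)) ∧
    gsmaj (tvec m * Am1) (tvec (m + 1)) ∧
    gsmaj (tvec m * Ai) (tvec (m + 1)) ∧
    gsmaj (tvec m * Ami * Amat d) (tvec (m + 2)) ∧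
    gsmaj (tvec m * A0 ^ ℓ * Amat d) (tvec (m + 1)) := by
  have ht : IsTRow (tvec m) := isTRow_tvec hm
  have hm_succ : 4 ≤ m + 1 := hm.trans m.le_succ
  rw [tvec_succ hm_succ, tvec_succ hm]
  exact ⟨geqv_mul_of_mem_Pgrp (R9_pow_mem_Pgrp 2), ht.gsmaj_mul_Am1, ht.gsmaj_mul_Ai,
    ht.gsmaj_mul_Ami_mul_Amat hd, ht.gsmaj_mul_A0_pow_mul_Amat hℓ hd⟩
end
end

section
/- Let N ∈ ℕ, N ≥ 1, ω = e^{2πi/3}, β = ω − 1 and D = {0, ±1, ±ω, ±ω²}. If an Eisenstein integer x ∈ ℤ[ω] has a 2-NAF (β, D)-representation containing exactly N nonzero digits, then x has at most s_N optimal representations, where s_N = ⌊(6·2^N + 1)/7⌋. -/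
open Matrix

noncomputable section

/-- The primitive cube root of unity `ω = exp(2πi/3)`. -/
def ω : ℂ := Complex.exp (2 * Real.pi * Complex.I / 3)

/-- The base `β = ω - 1`. -/
def eβ : ℂ := ω - 1

/-- The digit set `D = {0, ±1, ±ω, ±ω²}`. -/
def eD : Set ℂ := {0, 1, -1, ω, -ω, ω ^ 2, -ω ^ 2}

/-- The ring of Eisenstein integers `ℤ[ω]`, as a subset of `ℂ`. -/
def EisZ : Set ℂ := {x | ∃ a b : ℤ, x = (a : ℂ) + (b : ℂ) * ω}

/-- Value of a digit string `d_{n-1} ⋯ d_0`, given as a list with the least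
significant digit first: `eval [d_0, d_1, …, d_{n-1}] = Σ d_j β^j`. -/
def evalE (l : List ℂ) : ℂ :=
  l.foldr (fun d acc => d + eβ * acc) 0

/-- `l` (least significant digit first) is a `(β, D)`-representation of `x`. -/
def eIsRep (x : ℂ) (l : List ℂ) : Prop :=
  (∀ d ∈ l, d ∈ eD) ∧ evalE l = x

/-- A representation is normalized if it is empty or its leading digit
(the last entry of the LSD-first list) is nonzero. -/
def eNormalized (l : List ℂ) : Prop := l.getLast? ≠ some 0

open scoped Classical in
/-- Number of nonzero digits (Hamming weight). -/
def eweight (l : List ℂ) : ℕ := (l.filter (fun d => d ≠ 0)).length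

/-- `W`-NAF property: among any `W` consecutive digits at most one is nonzero. -/
def eNAF (W : ℕ) (l : List ℂ) : Prop :=
  ∀ j k : ℕ, j < k → k < j + W → l.getD j 0 ≠ 0 → l.getD k 0 = 0

/-- A representation of `x` is optimal if it is normalized and its number of
nonzero digits is minimal among all representations of `x`. -/
def eOptimal (x : ℂ) (l : List ℂ) : Prop :=
  eIsRep x l ∧ eNormalized l ∧ ∀ l' : List ℂ, eIsRep x l' → eweight l ≤ eweight l'

/-- The number of optimal representations of `x`. -/
def enumOpt (x : ℂ) : ℕ := Nat.card {l : List ℂ // eOptimal x l}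

/-- The sequence `s_N = ⌊(6·2^N + 1)/7⌋`. -/
def sseq (N : ℕ) : ℕ := (6 * 2 ^ N + 1) / 7

/-!
Put `ζ = 1 + ω`, a primitive sixth root of unity; the nonzero digits are exactly the powers of `ζ`.
Let `R(x, k)` be the number of normalized representations of `x` of weight `k`. Looking at the
least significant digit gives `R(βx, k) ≤ R(x, k)` and, for a unit `u`,
`R(u + βx, k + 1) ≤ R(x, k) + R(x - u, k) + R(x - uζ, k)`,
because the digits congruent to `u` modulo `β` are `u`, `uζ²` and `uζ⁴`.

Follow a 2-NAF from its leading end. If `z` is the number read so far, of weight `n`, then neither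
`z` nor its neighbours `z + r`, `r` a unit, admit representations of weight less than `n`,
respectively `n - 1`. Hence in the recursions for `v + β²z` and its neighbours only the seven counts
`R(z, n)` and `R(z + r, n - 1)` survive, and these obey a linear system of inequalities: six
`7 × 7` transition matrices, one for each quotient of consecutive nonzero digits. A family of
linear constraints, preserved by all six, keeps `R(z, n)` below `(6 · 2ⁿ + 1) / 7`.
-/

/-! ### Units of the Eisenstein integers -/

/-- The primitive sixth root of unity `1 + ω = -ω²`, whose powers are the units of `ℤ[ω]`. -/
def ζ : ℂ := 1 + ω

lemma isPrimitiveRoot_ω : IsPrimitiveRoot ω 3 := by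
  simpa [ω] using Complex.isPrimitiveRoot_exp 3 three_ne_zero

lemma ω_sq : ω ^ 2 = -1 - ω := by
  have h : ∑ i ∈ Finset.range 3, ω ^ i = 0 :=
    isPrimitiveRoot_ω.geom_sum_eq_zero (by norm_num)
  simp only [Finset.sum_range_succ, Finset.sum_range_zero] at h
  linear_combination h

lemma ω_re : ω.re = -1 / 2 := by
  have hconj : (starRingEnd ℂ) ω = -1 - ω := by
    rw [← Complex.inv_eq_conj (isPrimitiveRoot_ω.norm'_eq_one three_ne_zero), ← ω_sq]
    exact inv_eq_of_mul_eq_one_right (by linear_combination isPrimitiveRoot_ω.pow_eq_one)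
  have hre := congrArg Complex.re hconj
  simp only [Complex.conj_re, Complex.sub_re, Complex.neg_re, Complex.one_re] at hre
  linarith

lemma normSq_int_add_int_mul_ω (a b : ℤ) :
    Complex.normSq (a + b * ω) = (a ^ 2 - a * b + b ^ 2 : ℤ) := by
  have hω : Complex.normSq ω = 1 := by
    rw [Complex.normSq_eq_norm_sq, isPrimitiveRoot_ω.norm'_eq_one three_ne_zero, one_pow]
  have hcross : (a * (starRingEnd ℂ) (b * ω)).re = -(a * b) / 2 := by
    rw [map_mul, map_intCast, ← Complex.ofReal_intCast, ← Complex.ofReal_intCast,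
      Complex.re_ofReal_mul, Complex.re_ofReal_mul, Complex.conj_re, ω_re]
    ring
  rw [Complex.normSq_add, map_mul, hω, hcross, Complex.normSq_intCast, Complex.normSq_intCast]
  push_cast
  ring

lemma ζ_sq : ζ ^ 2 = ζ - 1 := by
  unfold ζ
  linear_combination ω_sq

lemma ζ_pow_three : ζ ^ 3 = -1 := by linear_combination (ζ + 1) * ζ_sq

lemma isPrimitiveRoot_ζ : IsPrimitiveRoot ζ 6 := by
  rw [← Polynomial.isRoot_cyclotomic_iff_charZero (by norm_num), Polynomial.cyclotomic_six]
  simp [ζ_sq]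

lemma eβ_eq : eβ = ζ - 2 := by
  unfold eβ ζ
  ring

/-- The ring structure on the set `EisZ` of Eisenstein integers, as a subring of `ℂ`; it makes the
closure lemmas for subrings available. -/
def eisSubring : Subring ℂ where
  carrier := EisZ
  zero_mem' := ⟨0, 0, by simp⟩
  one_mem' := ⟨1, 0, by simp⟩
  add_mem' := by
    rintro _ _ ⟨a, b, rfl⟩ ⟨c, d, rfl⟩
    exact ⟨a + c, b + d, by push_cast; ring⟩
  mul_mem' := by
    rintro _ _ ⟨a, b, rfl⟩ ⟨c, d, rfl⟩
    exact ⟨a * c - b * d, a * d + b * c - b * d, by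
      push_cast; linear_combination (b * d : ℂ) * ω_sq⟩
  neg_mem' := by
    rintro _ ⟨a, b, rfl⟩
    exact ⟨-a, -b, by push_cast; ring⟩

lemma ω_mem_eisSubring : ω ∈ eisSubring := ⟨0, 1, by simp⟩

lemma ζ_mem_eisSubring : ζ ∈ eisSubring := add_mem (one_mem _) ω_mem_eisSubring

lemma eβ_mem_eisSubring : eβ ∈ eisSubring := sub_mem ω_mem_eisSubring (one_mem _)

/-- The units of `ℤ[ω]`, which are also the nonzero digits, described as the sixth roots of
unity. -/
def IsEisUnit (u : ℂ) : Prop := u ^ 6 = 1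

namespace IsEisUnit

variable {u v : ℂ}

lemma one : IsEisUnit 1 := one_pow 6

lemma neg (hu : IsEisUnit u) : IsEisUnit (-u) := (Even.neg_pow (by decide) u).trans hu

lemma mul_ζ_pow (hu : IsEisUnit u) (i : ℕ) : IsEisUnit (u * ζ ^ i) := by
  rw [IsEisUnit, mul_pow, hu, pow_right_comm, isPrimitiveRoot_ζ.pow_eq_one, one_pow, one_mul]

lemma mul_ζ (hu : IsEisUnit u) : IsEisUnit (u * ζ) := by
  simpa only [pow_one] using hu.mul_ζ_pow 1

lemma ne_zero (hu : IsEisUnit u) : u ≠ 0 := by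
  rintro rfl
  simp [IsEisUnit] at hu

lemma normSq_eq_one (hu : IsEisUnit u) : Complex.normSq u = 1 := by
  rw [Complex.normSq_eq_norm_sq, Complex.norm_eq_one_of_pow_eq_one hu (by norm_num), one_pow]

lemma exists_eq_mul_ζ_pow (hu : IsEisUnit u) (hv : IsEisUnit v) :
    ∃ i : Fin 6, v = u * ζ ^ (i : ℕ) := by
  have hquot : (v / u) ^ 6 = 1 := by rw [div_pow, hu, hv, div_one]
  obtain ⟨i, hi, h⟩ := isPrimitiveRoot_ζ.eq_pow_of_pow_eq_one hquot
  exact ⟨⟨i, hi⟩, by rw [h, mul_div_cancel₀ v hu.ne_zero]⟩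

lemma mem_eisSubring (hu : IsEisUnit u) : u ∈ eisSubring := by
  obtain ⟨i, rfl⟩ := one.exists_eq_mul_ζ_pow hu
  exact mul_mem (one_mem _) (pow_mem ζ_mem_eisSubring _)

end IsEisUnit

lemma ζ_pow_add_val (i j : Fin 6) : ζ ^ ((i + j : Fin 6) : ℕ) = ζ ^ (i : ℕ) * ζ ^ (j : ℕ) := by
  rw [Fin.val_add, ← pow_eq_pow_mod _ isPrimitiveRoot_ζ.pow_eq_one, pow_add]

/-! ### Congruences between digits -/

lemma isEisUnit_of_mem_eD {d : ℂ} (hd : d ∈ eD) (h0 : d ≠ 0) : IsEisUnit d := by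
  have hω : ω ^ 6 = 1 := by linear_combination (ω ^ 3 + 1) * isPrimitiveRoot_ω.pow_eq_one
  have hωsq : (ω ^ 2) ^ 6 = 1 := by rw [pow_right_comm, hω, one_pow]
  simp only [eD, Set.mem_insert_iff, Set.mem_singleton_iff] at hd
  rcases hd with rfl | rfl | rfl | rfl | rfl | rfl | rfl
  exacts [absurd rfl h0, .one, IsEisUnit.neg .one, hω, IsEisUnit.neg hω, hωsq, IsEisUnit.neg hωsq]

lemma mem_eisSubring_of_mem_eD {d : ℂ} (hd : d ∈ eD) : d ∈ eisSubring := by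
  by_cases h0 : d = 0
  · exact h0 ▸ zero_mem _
  · exact (isEisUnit_of_mem_eD hd h0).mem_eisSubring

lemma three_dvd_of_eβ_mul_eq {e u : ℂ} (he : e ∈ eisSubring) (hu : IsEisUnit u) {a b : ℤ}
    (h : eβ * e = u * (a + b * ω)) : 3 ∣ a ^ 2 - a * b + b ^ 2 := by
  obtain ⟨c, d, rfl⟩ := he
  have hβ : Complex.normSq eβ = 3 := by
    simpa [eβ, sub_eq_neg_add] using normSq_int_add_int_mul_ω (-1) 1
  have hnorm := congrArg Complex.normSq h
  rw [map_mul, map_mul, hβ, hu.normSq_eq_one, one_mul, normSq_int_add_int_mul_ω,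
    normSq_int_add_int_mul_ω] at hnorm
  exact ⟨c ^ 2 - c * d + d ^ 2, by exact_mod_cast hnorm.symm⟩

lemma eβ_mul_ne_of_isEisUnit {e u : ℂ} (he : e ∈ eisSubring) (hu : IsEisUnit u) :
    eβ * e ≠ u := fun h => by
  have := three_dvd_of_eβ_mul_eq he hu (a := 1) (b := 0) (by simp [h])
  norm_num at this

lemma eβ_ne_zero : eβ ≠ 0 := sub_ne_zero.2 (isPrimitiveRoot_ω.ne_one (by norm_num))

lemma digit_eq_of_sub_eq_eβ_mul {u d e : ℂ} (hu : IsEisUnit u) (hd : d ∈ eD)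
    (he : e ∈ eisSubring) (h : d - u = eβ * e) :
    d = u ∨ d = u * ζ ^ 2 ∨ d = u * ζ ^ 4 := by
  have hd0 : d ≠ 0 := by
    rintro rfl
    exact eβ_mul_ne_of_isEisUnit he hu.neg (by linear_combination -h)
  obtain ⟨i, rfl⟩ := hu.exists_eq_mul_ζ_pow (isEisUnit_of_mem_eD hd hd0)
  have hdvd (a b : ℤ) (hab : ζ ^ (i : ℕ) - 1 = a + b * ω) : 3 ∣ a ^ 2 - a * b + b ^ 2 :=
    three_dvd_of_eβ_mul_eq he hu (by rw [← h, ← hab]; ring)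
  fin_cases i
  · simp
  · have := hdvd 0 1 (by simp [ζ])
    norm_num at this
  · simp
  · have := hdvd (-2) 0 (by norm_num [ζ_pow_three])
    norm_num at this
  · simp
  · have := hdvd (-1) (-1) (by
      have hζ : ζ = 1 + ω := rfl
      push_cast
      linear_combination ζ ^ 2 * ζ_pow_three - ζ_sq - hζ)
    norm_num at this

/-! ### Counting representations by weight -/

/-- The normalized `(β, D)`-representations of `x` of weight `k`. The weight is an integer so that
`k - 1` is meaningful (and the set empty) when `k = 0`. -/
def repsOfWeight (x : ℂ) (k : ℤ) : Set (List ℂ) :=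
  {l | eIsRep x l ∧ eNormalized l ∧ (eweight l : ℤ) = k}

/-- The number of normalized representations of `x` of weight `k`, with values in `ℕ∞` so that upper
bounds include finiteness. -/
def numReps (x : ℂ) (k : ℤ) : ℕ∞ := (repsOfWeight x k).encard

lemma eweight_zero_cons (l : List ℂ) : eweight (0 :: l) = eweight l := by simp [eweight]

lemma eweight_cons_of_ne_zero {d : ℂ} (hd : d ≠ 0) (l : List ℂ) :
    eweight (d :: l) = eweight l + 1 := by
  simp [eweight, hd]

lemma eNormalized.tail {d : ℂ} {l : List ℂ} (h : eNormalized (d :: l)) : eNormalized l := by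
  cases l with
  | nil => simp [eNormalized]
  | cons a l => simpa only [eNormalized, List.getLast?_cons_cons] using h

lemma eIsRep.mem_eisSubring {x : ℂ} {l : List ℂ} (h : eIsRep x l) : x ∈ eisSubring := by
  obtain ⟨hd, rfl⟩ := h
  induction l with
  | nil => exact zero_mem _
  | cons d l ih =>
    rw [List.forall_mem_cons] at hd
    exact add_mem (mem_eisSubring_of_mem_eD hd.1) (mul_mem eβ_mem_eisSubring (ih hd.2))

lemma exists_cons_of_mem_repsOfWeight {y : ℂ} (hy : y ≠ 0) {k : ℤ} {l : List ℂ}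
    (hl : l ∈ repsOfWeight y k) :
    ∃ d ∈ eD, ∃ x ∈ eisSubring, ∃ l', l = d :: l' ∧ y = d + eβ * x ∧
      l' ∈ repsOfWeight x (if d = 0 then k else k - 1) := by
  obtain ⟨⟨hdigits, rfl⟩, hnorm, rfl⟩ := hl
  cases l with
  | nil => exact absurd rfl hy
  | cons d l =>
    rw [List.forall_mem_cons] at hdigits
    have hrep : eIsRep (evalE l) l := ⟨hdigits.2, rfl⟩
    refine ⟨d, hdigits.1, evalE l, hrep.mem_eisSubring, l, rfl, rfl, hrep, hnorm.tail, ?_⟩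
    split_ifs with hd
    · rw [hd, eweight_zero_cons]
    · rw [eweight_cons_of_ne_zero hd]
      push_cast
      ring

lemma numReps_of_neg (x : ℂ) {k : ℤ} (hk : k < 0) : numReps x k = 0 := by
  rw [numReps, Set.encard_eq_zero, Set.eq_empty_iff_forall_notMem]
  rintro l ⟨-, -, hw⟩
  omega

lemma eNormalized.eq_nil {l : List ℂ} (h : eNormalized l) (hw : eweight l = 0) : l = [] := by
  have hzero : ∀ d ∈ l, d = 0 := by
    simpa [eweight] using hw
  by_contra hne
  exact h (by rw [List.getLast?_eq_some_getLast hne, hzero _ (List.getLast_mem hne)])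

lemma numReps_zero_le (x : ℂ) : numReps x 0 ≤ 1 := by
  refine Set.encard_le_one_iff_subsingleton.2
    (Set.subsingleton_of_subset_singleton (a := []) ?_)
  rintro l ⟨-, hnorm, hw⟩
  exact hnorm.eq_nil (by exact_mod_cast hw)

lemma numReps_eβ_mul_le {x : ℂ} (hx : x ∈ eisSubring) (k : ℤ) :
    numReps (eβ * x) k ≤ numReps x k := by
  rcases eq_or_ne x 0 with rfl | hx0
  · rw [mul_zero]
  have hsub : repsOfWeight (eβ * x) k ⊆ List.cons 0 '' repsOfWeight x k := by
    intro l hl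
    obtain ⟨d, hd, x', hx', l', rfl, hdx, hl'⟩ :=
      exists_cons_of_mem_repsOfWeight (mul_ne_zero eβ_ne_zero hx0) hl
    obtain rfl : d = 0 := by
      by_contra hd0
      exact eβ_mul_ne_of_isEisUnit (sub_mem hx hx') (isEisUnit_of_mem_eD hd hd0)
        (by linear_combination hdx)
    obtain rfl : x = x' := mul_left_cancel₀ eβ_ne_zero (by linear_combination hdx)
    exact ⟨l', by simpa using hl', rfl⟩
  exact (Set.encard_le_encard hsub).trans (Set.encard_image_le _ _)

lemma numReps_unit_add_le {u x : ℂ} (hu : IsEisUnit u) (hx : x ∈ eisSubring) (k : ℤ) :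
    numReps (u + eβ * x) k ≤
      numReps x (k - 1) + numReps (x - u) (k - 1) + numReps (x - u * ζ) (k - 1) := by
  have hy : u + eβ * x ≠ 0 := fun h =>
    eβ_mul_ne_of_isEisUnit hx hu.neg (by linear_combination h)
  have hsub : repsOfWeight (u + eβ * x) k ⊆
      List.cons u '' repsOfWeight x (k - 1) ∪
        List.cons (u * ζ ^ 2) '' repsOfWeight (x - u) (k - 1) ∪
        List.cons (u * ζ ^ 4) '' repsOfWeight (x - u * ζ) (k - 1) := by
    intro l hl
    obtain ⟨d, hd, x', hx', l', rfl, hdx, hl'⟩ := exists_cons_of_mem_repsOfWeight hy hl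
    have hdigit := digit_eq_of_sub_eq_eβ_mul hu hd (sub_mem hx hx') (by linear_combination -hdx)
    have hd0 : d ≠ 0 := by
      rcases hdigit with rfl | rfl | rfl
      exacts [hu.ne_zero, (hu.mul_ζ_pow 2).ne_zero, (hu.mul_ζ_pow 4).ne_zero]
    rw [if_neg hd0] at hl'
    rcases hdigit with rfl | rfl | rfl
    · obtain rfl : x = x' := mul_left_cancel₀ eβ_ne_zero (by linear_combination hdx)
      exact .inl (.inl ⟨l', hl', rfl⟩)
    · obtain rfl : x - u = x' := mul_left_cancel₀ eβ_ne_zero (by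
        linear_combination hdx - u * eβ_eq + u * ζ_sq)
      exact .inl (.inr ⟨l', hl', rfl⟩)
    · obtain rfl : x - u * ζ = x' := mul_left_cancel₀ eβ_ne_zero (by
        linear_combination hdx - u * ζ * eβ_eq - u * ζ_sq + u * ζ * ζ_pow_three)
      exact .inr ⟨l', hl', rfl⟩
  refine (Set.encard_le_encard hsub).trans ((Set.encard_union_le _ _).trans ?_)
  refine add_le_add ((Set.encard_union_le _ _).trans (add_le_add ?_ ?_)) ?_
  all_goals exact Set.encard_image_le _ _

lemma numReps_unit_add_eq_zero {u x : ℂ} (hu : IsEisUnit u) (hx : x ∈ eisSubring) {k : ℤ}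
    (h : numReps x (k - 1) = 0) (hsub : numReps (x - u) (k - 1) = 0)
    (hsubζ : numReps (x - u * ζ) (k - 1) = 0) : numReps (u + eβ * x) k = 0 := by
  simpa only [h, hsub, hsubζ, add_zero, nonpos_iff_eq_zero] using numReps_unit_add_le hu hx k

/-! ### The linear system along a 2-NAF -/

/-- `z` is an Eisenstein integer with no representation of weight less than `n`, and none of its
neighbours `z + r`, `r` a unit, has a representation of weight less than `n - 1`. The condition on
the neighbours makes the notion stable under appending digits to a 2-NAF. -/
structure WeightAtLeast (z : ℂ) (n : ℤ) : Prop where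
  mem : z ∈ eisSubring
  numReps_eq_zero : ∀ k < n, numReps z k = 0
  numReps_add_eq_zero : ∀ r, IsEisUnit r → ∀ k < n - 1, numReps (z + r) k = 0

namespace WeightAtLeast

variable {z v : ℂ} {n k : ℤ}

lemma zero : WeightAtLeast 0 0 where
  mem := zero_mem _
  numReps_eq_zero _ hk := numReps_of_neg _ hk
  numReps_add_eq_zero _ _ _ hk := numReps_of_neg _ (by omega)

lemma numReps_eβ_mul_sub_le (h : WeightAtLeast z n) (hv : IsEisUnit v) (hk : k ≤ n) :
    numReps (eβ * z - v) k ≤ numReps (z + v) (k - 1) + numReps (z + v * ζ) (k - 1) := by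
  simpa only [h.numReps_eq_zero (k - 1) (by omega), zero_add, neg_add_eq_sub, neg_mul,
    sub_neg_eq_add] using numReps_unit_add_le hv.neg h.mem k

lemma numReps_eβ_mul_add_eq_zero (h : WeightAtLeast z n) (hv : IsEisUnit v) (hk : k < n) :
    numReps (eβ * z + v) k = 0 := by
  have hle := h.numReps_eβ_mul_sub_le hv.neg hk.le
  rw [h.numReps_add_eq_zero _ hv.neg (k - 1) (by omega),
    h.numReps_add_eq_zero _ hv.neg.mul_ζ (k - 1) (by omega), sub_neg_eq_add, add_zero] at hle
  exact nonpos_iff_eq_zero.1 hle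

lemma eβ_mul (h : WeightAtLeast z n) : WeightAtLeast (eβ * z) n where
  mem := mul_mem eβ_mem_eisSubring h.mem
  numReps_eq_zero k hk :=
    nonpos_iff_eq_zero.1 ((numReps_eβ_mul_le h.mem k).trans_eq (h.numReps_eq_zero k hk))
  numReps_add_eq_zero r hr k hk := h.numReps_eβ_mul_add_eq_zero hr (by omega)

lemma numReps_naf_le (h : WeightAtLeast z n) (hv : IsEisUnit v) (hk : k ≤ n) :
    numReps (v + eβ * (eβ * z)) (k + 1) ≤
      numReps z k + 2 * numReps (z + v * ζ) (k - 1) + numReps (z + v) (k - 1) +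
        numReps (z + v * ζ ^ 2) (k - 1) := by
  calc numReps (v + eβ * (eβ * z)) (k + 1)
      ≤ numReps (eβ * z) k + numReps (eβ * z - v) k + numReps (eβ * z - v * ζ) k := by
        simpa only [add_sub_cancel_right] using
          numReps_unit_add_le hv h.eβ_mul.mem (k + 1)
    _ ≤ numReps z k + (numReps (z + v) (k - 1) + numReps (z + v * ζ) (k - 1)) +
          (numReps (z + v * ζ) (k - 1) + numReps (z + v * ζ * ζ) (k - 1)) :=
        add_le_add (add_le_add (numReps_eβ_mul_le h.mem k) (h.numReps_eβ_mul_sub_le hv hk))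
          (h.numReps_eβ_mul_sub_le hv.mul_ζ hk)
    _ = _ := by
        rw [mul_assoc v ζ ζ, ← sq]
        ring

lemma numReps_naf_eq_zero (h : WeightAtLeast z n) (hv : IsEisUnit v) (hk : k ≤ n) :
    numReps (v + eβ * (eβ * z)) k = 0 := by
  have hle := h.numReps_naf_le (k := k - 1) hv (by omega)
  rw [sub_add_cancel, h.numReps_eq_zero _ (by omega),
    h.numReps_add_eq_zero _ hv.mul_ζ _ (by omega), h.numReps_add_eq_zero _ hv _ (by omega),
    h.numReps_add_eq_zero _ (hv.mul_ζ_pow 2) _ (by omega)] at hle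
  simpa using hle

lemma numReps_naf_add_le (h : WeightAtLeast z n) (hv : IsEisUnit v) (hk : k ≤ n) :
    numReps (v + eβ * (eβ * z) + v) k ≤ numReps (z + v * ζ) (k - 1) := by
  set Z := z + v * ζ with hZ
  have hZmem : Z ∈ eisSubring := add_mem h.mem hv.mul_ζ.mem_eisSubring
  -- Two copies of `v` are resolved by `2v = -v + β²(vζ)`, since `β²ζ = 3`.
  have hdouble : v + eβ * (eβ * z) + v = -v + eβ * (eβ * Z) := by
    rw [hZ, eβ_eq]
    linear_combination (-(v * ζ) + 3 * v) * ζ_sq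
  have hZzero : numReps Z (k - 1 - 1) = 0 := h.numReps_add_eq_zero _ hv.mul_ζ _ (by omega)
  have hzzero : numReps z (k - 1 - 1) = 0 := h.numReps_eq_zero _ (by omega)
  have hnbr {u : ℂ} (hu : IsEisUnit u) : numReps (z + u) (k - 1 - 1) = 0 :=
    h.numReps_add_eq_zero _ hu _ (by omega)
  have hZsub : Z - v * ζ = z := add_sub_cancel_right _ _
  have hcarry : numReps (v + eβ * Z) (k - 1) = 0 := by
    refine numReps_unit_add_eq_zero hv hZmem hZzero ?_ (by rwa [hZsub])
    rw [show Z - v = z + v * ζ ^ 2 by rw [hZ, ζ_sq]; ring]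
    exact hnbr (hv.mul_ζ_pow 2)
  have hcarryζ : numReps (v * ζ + eβ * Z) (k - 1) = 0 := by
    refine numReps_unit_add_eq_zero hv.mul_ζ hZmem hZzero (by rwa [hZsub]) ?_
    rw [show Z - v * ζ * ζ = z + v by rw [hZ]; linear_combination -v * ζ_sq]
    exact hnbr hv
  calc numReps (v + eβ * (eβ * z) + v) k
      ≤ numReps (eβ * Z) (k - 1) + numReps (v + eβ * Z) (k - 1) +
          numReps (v * ζ + eβ * Z) (k - 1) := by
        rw [hdouble]
        simpa only [neg_mul, sub_neg_eq_add, add_comm (eβ * Z)] using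
          numReps_unit_add_le hv.neg (mul_mem eβ_mem_eisSubring hZmem) k
    _ = numReps (eβ * Z) (k - 1) := by rw [hcarry, hcarryζ, add_zero, add_zero]
    _ ≤ numReps Z (k - 1) := numReps_eβ_mul_le hZmem _

/-- The neighbours `y + vζʲ` of `y = v + β²z` for `j = 1, …, 5` are `β(βz - vζ)`, `vζ + β²z`, `β²z`,
`vζ⁵ + β²z` and `β(βz - v)`. -/
lemma numReps_naf_add_ζ_pow_le (h : WeightAtLeast z n) (hv : IsEisUnit v) (hk : k ≤ n)
    (j : Fin 6) :
    numReps (v + eβ * (eβ * z) + v * ζ ^ (j : ℕ)) k ≤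
      ![numReps (z + v * ζ) (k - 1),
        numReps (z + v * ζ) (k - 1) + numReps (z + v * ζ ^ 2) (k - 1), 0, numReps z k, 0,
        numReps (z + v) (k - 1) + numReps (z + v * ζ) (k - 1)] j := by
  have hζ5 : ζ ^ 5 = 1 - ζ := by linear_combination ζ ^ 2 * ζ_pow_three - ζ_sq
  have hshift {u : ℂ} (hu : IsEisUnit u) : numReps (eβ * (eβ * z - u)) k ≤
      numReps (z + u) (k - 1) + numReps (z + u * ζ) (k - 1) :=
    (numReps_eβ_mul_le (sub_mem h.eβ_mul.mem hu.mem_eisSubring) k).trans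
      (h.numReps_eβ_mul_sub_le hu hk)
  fin_cases j
  · simpa using h.numReps_naf_add_le hv hk
  · rw [show v + eβ * (eβ * z) + v * ζ ^ 1 = eβ * (eβ * z - v * ζ) by
      rw [eβ_eq]; linear_combination v * ζ_sq]
    simpa [mul_assoc, ← sq] using hshift hv.mul_ζ
  · rw [show v + eβ * (eβ * z) + v * ζ ^ 2 = v * ζ + eβ * (eβ * z) by rw [ζ_sq]; ring]
    exact (h.numReps_naf_eq_zero hv.mul_ζ hk).le
  · rw [show v + eβ * (eβ * z) + v * ζ ^ 3 = eβ * (eβ * z) by rw [ζ_pow_three]; ring]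
    exact (numReps_eβ_mul_le h.eβ_mul.mem k).trans (numReps_eβ_mul_le h.mem k)
  · rw [show v + eβ * (eβ * z) + v * ζ ^ 4 = v * ζ ^ 5 + eβ * (eβ * z) by
      rw [hζ5]; linear_combination v * ζ * ζ_pow_three]
    exact (h.numReps_naf_eq_zero (hv.mul_ζ_pow 5) hk).le
  · rw [show v + eβ * (eβ * z) + v * ζ ^ 5 = eβ * (eβ * z - v) by rw [hζ5, eβ_eq]; ring]
    exact hshift hv

lemma naf (h : WeightAtLeast z n) (hv : IsEisUnit v) :
    WeightAtLeast (v + eβ * (eβ * z)) (n + 1) where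
  mem := add_mem hv.mem_eisSubring h.eβ_mul.eβ_mul.mem
  numReps_eq_zero k hk := h.numReps_naf_eq_zero hv (by omega)
  numReps_add_eq_zero r hr k hk := by
    have hkn : k < n := by omega
    obtain ⟨j, rfl⟩ := hv.exists_eq_mul_ζ_pow hr
    have hle := h.numReps_naf_add_ζ_pow_le hv hkn.le j
    rw [h.numReps_eq_zero k hkn, h.numReps_add_eq_zero _ hv (k - 1) (by omega),
      h.numReps_add_eq_zero _ hv.mul_ζ (k - 1) (by omega),
      h.numReps_add_eq_zero _ (hv.mul_ζ_pow 2) (k - 1) (by omega), add_zero] at hle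
    refine nonpos_iff_eq_zero.1 (hle.trans_eq ?_)
    fin_cases j <;> rfl

end WeightAtLeast

/-- A candidate for upper bounds of the seven counts attached to a number `z` of weight `n`: `self`
for the representations of `z` of weight `n`, and `nbr j` for those of weight `n - 1` of the
neighbour in direction `vζʲ`, where `v` is a reference unit. -/
structure Profile where
  self : ℕ
  nbr : Fin 6 → ℕ

namespace Profile

variable {P : Profile} {v z : ℂ}

/-- `P` bounds the seven counts of `z` at weight `n`, with directions measured from the unit `v`. -/
structure Bounds (P : Profile) (v z : ℂ) (n : ℤ) : Prop where
  self_le : numReps z n ≤ P.self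
  nbr_le : ∀ j : Fin 6, numReps (z + v * ζ ^ (j : ℕ)) (n - 1) ≤ P.nbr j

/-- The transition of the linear system when the block `0 vζⁱ` is appended to a 2-NAF, `v` being the
previous reference unit; the new reference unit is `vζⁱ`. -/
def next (P : Profile) (i : Fin 6) : Profile where
  self := P.self + 2 * P.nbr (i + 1) + P.nbr i + P.nbr (i + 2)
  nbr := ![P.nbr (i + 1), P.nbr (i + 1) + P.nbr (i + 2), 0, P.self, 0, P.nbr i + P.nbr (i + 1)]

lemma Bounds.eβ_mul {n : ℤ} (hP : P.Bounds v z n) (h : WeightAtLeast z n) (hv : IsEisUnit v) :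
    P.Bounds v (eβ * z) n where
  self_le := (numReps_eβ_mul_le h.mem n).trans hP.self_le
  nbr_le j := by
    rw [h.numReps_eβ_mul_add_eq_zero (hv.mul_ζ_pow j) (sub_one_lt n)]
    exact zero_le

lemma Bounds.next {n : ℤ} (hP : P.Bounds v z n) (h : WeightAtLeast z n) (hv : IsEisUnit v)
    (i : Fin 6) :
    (P.next i).Bounds (v * ζ ^ (i : ℕ)) (v * ζ ^ (i : ℕ) + eβ * (eβ * z)) (n + 1) := by
  have hnbr (j : Fin 6) :
      numReps (z + v * ζ ^ (i : ℕ) * ζ ^ (j : ℕ)) (n - 1) ≤ P.nbr (i + j) := by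
    simpa only [ζ_pow_add_val, mul_assoc] using hP.nbr_le (i + j)
  have hu : IsEisUnit (v * ζ ^ (i : ℕ)) := hv.mul_ζ_pow i
  generalize v * ζ ^ (i : ℕ) = u at hnbr hu ⊢
  have h0 : numReps (z + u) (n - 1) ≤ P.nbr i := by simpa using hnbr 0
  have h1 : numReps (z + u * ζ) (n - 1) ≤ P.nbr (i + 1) := by simpa using hnbr 1
  have h2 : numReps (z + u * ζ ^ 2) (n - 1) ≤ P.nbr (i + 2) := hnbr 2
  refine ⟨?_, fun j => ?_⟩
  · refine (h.numReps_naf_le hu le_rfl).trans ?_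
    push_cast [Profile.next]
    gcongr
    exact hP.self_le
  · rw [add_sub_cancel_right]
    refine (h.numReps_naf_add_ζ_pow_le hu le_rfl j).trans ?_
    fin_cases j
    · exact h1
    · exact (add_le_add h1 h2).trans_eq (Nat.cast_add _ _).symm
    · exact zero_le
    · exact hP.self_le
    · exact zero_le
    · exact (add_le_add h0 h1).trans_eq (Nat.cast_add _ _).symm

/-- The numerical invariant of the linear system after `n` nonzero digits. Up to rounding, the
bounds are `6 · 2ⁿ / 7` for `self`, half of it for `nbr 3`, a quarter of it for `nbr 0`, `nbr 1` and
`nbr 5`, and zero for `nbr 2` and `nbr 4`. The bounds on sums are there only because they round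
better than the sums of the individual bounds. -/
structure Admissible (P : Profile) (n : ℕ) : Prop where
  self_le : 7 * P.self ≤ 6 * 2 ^ n + 1
  nbr_zero_le : 14 * P.nbr 0 ≤ 3 * 2 ^ n + 4
  nbr_one_le : 14 * P.nbr 1 ≤ 3 * 2 ^ n + 4
  nbr_two_eq : P.nbr 2 = 0
  nbr_three_le : 7 * P.nbr 3 ≤ 3 * 2 ^ n + 1
  nbr_four_eq : P.nbr 4 = 0
  nbr_five_le : 14 * P.nbr 5 ≤ 3 * 2 ^ n + 4
  nbr_zero_add_one_le : 7 * (P.nbr 0 + P.nbr 1) ≤ 3 * 2 ^ n + 2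
  nbr_zero_add_five_le : 7 * (P.nbr 0 + P.nbr 5) ≤ 3 * 2 ^ n + 2

lemma two_pow_mod_seven (n : ℕ) : 2 ^ n % 7 = 1 ∨ 2 ^ n % 7 = 2 ∨ 2 ^ n % 7 = 4 := by
  induction n with
  | zero => simp
  | succ n ih => omega

lemma Admissible.next {n : ℕ} (h : P.Admissible n) (i : Fin 6) :
    (P.next i).Admissible (n + 1) := by
  obtain ⟨hself, h0, h1, h2, h3, h4, h5, h01, h05⟩ := h
  -- The constants are exact: whether rounded bounds add up correctly depends on `2ⁿ` modulo `7`.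
  have hmod := two_pow_mod_seven n
  fin_cases i <;> constructor <;>
    simp only [Profile.next, Fin.zero_eta, Fin.mk_one, Fin.reduceFinMk, Fin.isValue, zero_add,
      Fin.reduceAdd, cons_val] <;>
    omega

end Profile

/-! ### The bound on the number of optimal representations -/

lemma eNAF.tail {W : ℕ} {d : ℂ} {l : List ℂ} (h : eNAF W (d :: l)) : eNAF W l := by
  intro j k hjk hk hj
  simpa using h (j + 1) (k + 1) (by omega) (by omega) (by simpa using hj)

lemma eNAF.eq_zero_of_ne_zero {d e : ℂ} {l : List ℂ} (h : eNAF 2 (d :: e :: l)) (hd : d ≠ 0) :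
    e = 0 := by
  simpa using h 0 1 (by omega) (by omega) (by simpa using hd)

theorem eNAF.evalE_induction {motive : ℂ → ℕ → Prop} (zero : motive 0 0)
    (eβ_mul : ∀ z n, motive z n → motive (eβ * z) n)
    (unit_add : ∀ v z n, IsEisUnit v → motive z n → motive (v + eβ * (eβ * z)) (n + 1)) :
    ∀ l : List ℂ, (∀ d ∈ l, d ∈ eD) → eNAF 2 l → motive (evalE l) (eweight l)
  | [], _, _ => by simpa [evalE, eweight] using zero
  | [d], hd, _ => by
    by_cases hd0 : d = 0
    · simpa [evalE, eweight, hd0] using eβ_mul 0 0 zero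
    · simpa [evalE, eweight, hd0] using
        unit_add d 0 0 (isEisUnit_of_mem_eD (hd d (by simp)) hd0) zero
  | d :: e :: l, hd, hnaf => by
    by_cases hd0 : d = 0
    · have ih := eNAF.evalE_induction zero eβ_mul unit_add (e :: l)
        (List.forall_mem_cons.1 hd).2 hnaf.tail
      simpa [evalE, eweight, hd0] using eβ_mul _ _ ih
    · obtain rfl := hnaf.eq_zero_of_ne_zero hd0
      have ih := eNAF.evalE_induction zero eβ_mul unit_add l
        (fun a ha => hd a (by simp [ha])) hnaf.tail.tail
      simpa [evalE, eweight, hd0] using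
        unit_add d _ _ (isEisUnit_of_mem_eD (hd d (by simp)) hd0) ih

lemma exists_admissible_bounds {l : List ℂ} (hd : ∀ d ∈ l, d ∈ eD) (hnaf : eNAF 2 l) :
    WeightAtLeast (evalE l) (eweight l) ∧ ∃ v P, IsEisUnit v ∧
      Profile.Bounds P v (evalE l) (eweight l) ∧ P.Admissible (eweight l) := by
  refine eNAF.evalE_induction (motive := fun z n => WeightAtLeast z n ∧ ∃ v P, IsEisUnit v ∧
    Profile.Bounds P v z n ∧ P.Admissible n) ?_ ?_ ?_ l hd hnaf
  · refine ⟨.zero, 1, ⟨1, 0⟩, .one, ⟨numReps_zero_le 0, fun j => ?_⟩, by constructor <;> simp⟩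
    exact (numReps_of_neg _ (by simp)).trans_le zero_le
  · rintro z n ⟨hz, v, P, hv, hP, hadm⟩
    exact ⟨hz.eβ_mul, v, P, hv, hP.eβ_mul hz hv, hadm⟩
  · rintro u z n hu ⟨hz, v, P, hv, hP, hadm⟩
    obtain ⟨i, rfl⟩ := hv.exists_eq_mul_ζ_pow hu
    push_cast
    exact ⟨hz.naf hu, _, P.next i, hu, hP.next hz hv i, hadm.next i⟩

lemma WeightAtLeast.setOf_eOptimal_subset {x : ℂ} {l : List ℂ}
    (h : WeightAtLeast x (eweight l)) (hrep : eIsRep x l) :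
    {l' | eOptimal x l'} ⊆ repsOfWeight x (eweight l) := by
  rintro l' ⟨hrep', hnorm', hmin⟩
  have hmem : l' ∈ repsOfWeight x (eweight l') := ⟨hrep', hnorm', rfl⟩
  have hge : (eweight l : ℤ) ≤ eweight l' := by
    by_contra! hlt
    have hempty := Set.encard_eq_zero.1 (h.numReps_eq_zero _ hlt)
    exact (hempty ▸ hmem : l' ∈ (∅ : Set (List ℂ)))
  rwa [le_antisymm hge (by exact_mod_cast hmin l hrep)]

/-- If the 2-NAF representation of an Eisenstein integer `x` has exactly
`N ≥ 1` nonzero digits, then `x` has at most `s_N` optimal representations. -/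
theorem stmt14 (N : ℕ) (hN : 1 ≤ N) (x : ℂ) (hx : x ∈ EisZ) (l : List ℂ)
    (hrep : eIsRep x l) (hnaf : eNAF 2 l) (hw : eweight l = N) :
    enumOpt x ≤ sseq N := by
  obtain ⟨hdigits, rfl⟩ := hrep
  subst hw
  obtain ⟨hmin, v, P, -, hP, hadm⟩ := exists_admissible_bounds hdigits hnaf
  have hself : P.self ≤ sseq (eweight l) := by
    rw [sseq, Nat.le_div_iff_mul_le (by norm_num), mul_comm]
    exact hadm.self_le
  refine ENat.toNat_le_of_le_natCast ?_
  calc {l' | eOptimal (evalE l) l'}.encard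
      ≤ numReps (evalE l) (eweight l) :=
        Set.encard_le_encard (hmin.setOf_eOptimal_subset ⟨hdigits, rfl⟩)
    _ ≤ P.self := hP.self_le
    _ ≤ sseq (eweight l) := by exact_mod_cast hself
end
end
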